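/- Let N ≥ 1 be an integer, let j ∈ {1, 2}, and let γ*, β, G, A, B be real numbers with 0 ≤ γ* < 1/N², 0 ≤ β < 1/N², G ≥ 0, A ≥ 0, B ≥ 0. Let (u_m)_{m≥1} and (v_m)_{m≥1} be sequences of reals with 0 ≤ u_m ≤ β and 0 ≤ v_m ≤ γ* for all m. Then for every integer k ≥ 1, N^{jk}·(∏_{m=1}^k u_m)·G + A·∑_{m=1}^k N^{j(k−m+1)}·u_m·(∏_{n=m+1}^k v_n) + B·∑_{m=1}^{k−1} N^{j(k−m+1)}·(∏_{n=m+1}^k u_n) ≤ N^j β·( G + A/(1 − N^j γ*) + N^j B/(1 − N^j β) ). -/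

import Mathlib

theorem geom_aux (c : ℝ) (h0 : 0 ≤ c) (h1 : c < 1) (k : ℕ) :
    ∑ m ∈ Finset.Icc 1 k, c ^ (k - m) ≤ 1 / (1 - c) := by
  have hc : 0 < 1 - c := by linarith
  induction k with
  | zero => simp; linarith
  | succ k ih =>
    rw [Finset.sum_Icc_succ_top (by omega)]
    have : ∑ m ∈ Finset.Icc 1 k, c ^ (k + 1 - m) = c * ∑ m ∈ Finset.Icc 1 k, c ^ (k - m) := by
      rw [Finset.mul_sum]
      refine Finset.sum_congr rfl fun m hm => ?_
      rw [Finset.mem_Icc] at hm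
      rw [show k + 1 - m = (k - m) + 1 by omega]
      ring
    rw [this, Nat.sub_self, pow_zero]
    have h2 := mul_le_mul_of_nonneg_left ih h0
    have h3 : c * (1 / (1 - c)) + 1 = 1 / (1 - c) := by field_simp; ring
    linarith

theorem prod_aux (w : ℕ → ℝ) (b : ℝ) (hw : ∀ m, 0 ≤ w m ∧ w m ≤ b) (m k : ℕ) :
    ∏ n ∈ Finset.Icc (m + 1) k, w n ≤ b ^ (k - m) := by
  refine (Finset.prod_le_prod (fun i _ => (hw i).1) (fun i _ => (hw i).2)).trans ?_
  simp

/-- The key estimate in the proof of the bound on `‖T_j(σ,g) − T_j(ς,g)‖`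
for the Read–Bajraktarevic operators associated with the derivatives
(`j = 1, 2`) of a Cubic Spline SFIF on `N` subintervals: if
`0 ≤ u_m ≤ β < 1/N²` and `0 ≤ v_m ≤ γ* < 1/N²`, then for every `k ≥ 1`,
`N^{jk}(∏ u_m)G + A ∑ N^{j(k−m+1)} u_m (∏ v_n) + B ∑ N^{j(k−m+1)} (∏ u_n)
  ≤ N^j β (G + A/(1−N^jγ*) + N^jB/(1−N^jβ))`. -/
theorem stmt_8 (N : ℕ) (hN : 1 ≤ N) (j : ℕ) (hj : j = 1 ∨ j = 2)
    (γs β G A B : ℝ) (hγ0 : 0 ≤ γs) (hγ1 : γs < 1 / (N : ℝ) ^ 2)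
    (hβ0 : 0 ≤ β) (hβ1 : β < 1 / (N : ℝ) ^ 2)
    (hG : 0 ≤ G) (hA : 0 ≤ A) (hB : 0 ≤ B)
    (u v : ℕ → ℝ) (hu : ∀ m, 0 ≤ u m ∧ u m ≤ β) (hv : ∀ m, 0 ≤ v m ∧ v m ≤ γs)
    (k : ℕ) (hk : 1 ≤ k) :
    (N : ℝ) ^ (j * k) * (∏ m ∈ Finset.Icc 1 k, u m) * G +
      A * ∑ m ∈ Finset.Icc 1 k,
        (N : ℝ) ^ (j * (k - m + 1)) * (u m * ∏ n ∈ Finset.Icc (m + 1) k, v n) +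
      B * ∑ m ∈ Finset.Icc 1 (k - 1),
        (N : ℝ) ^ (j * (k - m + 1)) * ∏ n ∈ Finset.Icc (m + 1) k, u n ≤
    (N : ℝ) ^ j * β *
      (G + A / (1 - (N : ℝ) ^ j * γs) +
        (N : ℝ) ^ j * B / (1 - (N : ℝ) ^ j * β)) := by
  have hN' : (1 : ℝ) ≤ (N : ℝ) := by exact_mod_cast hN
  have hM0 : 0 < (N : ℝ) ^ j := by positivity
  have hM2 : (N : ℝ) ^ j ≤ (N : ℝ) ^ 2 := pow_le_pow_right₀ hN' (by omega)
  have key : ∀ x : ℝ, 0 ≤ x → x < 1 / (N : ℝ) ^ 2 → (N : ℝ) ^ j * x < 1 := by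
    intro x hx0 hx
    rw [lt_div_iff₀ (by positivity)] at hx
    nlinarith [mul_le_mul_of_nonneg_right hM2 hx0]
  have hb1 := key β hβ0 hβ1
  have hc1 := key γs hγ0 hγ1
  simp only [pow_mul]
  generalize (N : ℝ) ^ j = M at *
  have hb0 : 0 ≤ M * β := by positivity
  have hc0 : 0 ≤ M * γs := by positivity
  obtain ⟨l, rfl⟩ : ∃ l, k = l + 1 := ⟨k - 1, by omega⟩
  have e1 : M ^ (l + 1) * (∏ m ∈ Finset.Icc 1 (l + 1), u m) ≤ M * β := by
    have h := prod_aux u β hu 0 (l + 1)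
    simp only [zero_add, Nat.sub_zero] at h
    calc _ ≤ M ^ (l + 1) * β ^ (l + 1) := by gcongr
      _ = (M * β) ^ (l + 1) := by rw [mul_pow]
      _ ≤ M * β := pow_le_of_le_one hb0 hb1.le (by omega)
  have e2 : ∑ m ∈ Finset.Icc 1 (l + 1),
      M ^ (l + 1 - m + 1) * (u m * ∏ n ∈ Finset.Icc (m + 1) (l + 1), v n) ≤
      M * β * (1 / (1 - M * γs)) := by
    refine le_trans ?_ (mul_le_mul_of_nonneg_left (geom_aux _ hc0 hc1 (l + 1)) hb0)
    rw [Finset.mul_sum]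
    refine Finset.sum_le_sum fun m _ => ?_
    have h := prod_aux v γs hv m (l + 1)
    calc _ ≤ M ^ (l + 1 - m + 1) * (β * γs ^ (l + 1 - m)) := by
            have := (hu m).2
            have h5 : 0 ≤ ∏ n ∈ Finset.Icc (m + 1) (l + 1), v n :=
              Finset.prod_nonneg fun i _ => (hv i).1
            gcongr
      _ = _ := by rw [mul_pow]; ring
  have e3 : ∑ m ∈ Finset.Icc 1 l,
      M ^ (l + 1 - m + 1) * ∏ n ∈ Finset.Icc (m + 1) (l + 1), u n ≤
      M * (M * β) * (1 / (1 - M * β)) := by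
    refine le_trans ?_ (mul_le_mul_of_nonneg_left (geom_aux _ hb0 hb1 l) (by positivity))
    rw [Finset.mul_sum]
    refine Finset.sum_le_sum fun m hm => ?_
    rw [Finset.mem_Icc] at hm
    have h := prod_aux u β hu m (l + 1)
    calc _ ≤ M ^ (l + 1 - m + 1) * β ^ (l + 1 - m) := by gcongr
      _ = _ := by
        rw [show l + 1 - m = (l - m) + 1 by omega, mul_pow]; ring
  rw [Nat.add_sub_cancel]
  calc _ ≤ M * β * G + A * (M * β * (1 / (1 - M * γs))) +
        B * (M * (M * β) * (1 / (1 - M * β))) := by gcongr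
    _ = _ := by ring
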